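/- arXiv:2111.04166 — 2 statements merged into one kernel-verified Lean document; each statement's English description precedes it below -/
import Mathlib

section
/- Let F_q be a finite field of characteristic three, let σ ∈ F_q be a nonsquare, and let n > 1 be an integer. Then |𝓘(x^3 − σx, 1, n, q)| = (1/(3 n_3)) I(n/(2 n_3), q^{2 n_3}); in particular this cardinality is 0 when n/n_3 is odd. -/
open Polynomial

/-- The transform `f_R` of a nonzero polynomial `f` by the rational expression `R = g/h`. -/
noncomputable def ratTransform {K : Type*} [Field K] (g h f : K[X]) : K[X] :=
  ∑ i ∈ Finset.range (f.natDegree + 1), C (f.coeff i) * g ^ i * h ^ (f.natDegree - i)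

/-- `𝓘(g,h,n,q)`: the set of monic irreducible polynomials `f` of degree `n` over the field
such that `f_R` is irreducible. -/
noncomputable def IrredSet {K : Type*} [Field K] (g h : K[X]) (n : ℕ) : Set K[X] :=
  {f | f.Monic ∧ Irreducible f ∧ f.natDegree = n ∧ Irreducible (ratTransform g h f)}

/-- `I(n,q) = (1/n) ∑_{d ∣ n} μ(d) q^{n/d}`, used formally for any rational `q`. -/
noncomputable def Ifun (n : ℕ) (q : ℚ) : ℚ :=
  (1 / (n : ℚ)) * ∑ d ∈ n.divisors, ((ArithmeticFunction.moebius d : ℤ) : ℚ) * q ^ (n / d)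

/-- `I(n/m, q)` with the convention that it is `0` when `m` does not divide `n`
(i.e. when `n/m` is not a positive integer). -/
noncomputable def IfunD (n m : ℕ) (q : ℚ) : ℚ := if m ∣ n then Ifun (n / m) q else 0

/-- `n₃`: the largest power of `3` dividing `n`. -/
def nThree (n : ℕ) : ℕ := 3 ^ (n.factorization 3)

set_option linter.unusedSectionVars false

/-- The Frobenius `x ↦ x ^ q`. -/
noncomputable abbrev fr (F K : Type*) [Field F] [Fintype F] [Field K] [Algebra F K] : K →ₐ[F] K :=
  FiniteField.frobeniusAlgHom F K

/-- The additive map `x ↦ x ^ 3 - σ x`. -/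
noncomputable def Lm {F : Type*} (K : Type*) [Field F] [Field K] [Algebra F K] (σ : F) (x : K) : K :=
  x ^ 3 - algebraMap F K σ * x

/-- `α` is fixed by the `n`-th power of Frobenius and not an `L`-image of such. -/
def Good {F : Type*} (K : Type*) [Field F] [Fintype F] [Field K] [Algebra F K] (σ : F) (n : ℕ)
    (a : K) : Prop :=
  (fr F K)^[n] a = a ∧ ∀ b : K, Lm K σ b = a → (fr F K)^[n] b ≠ b

section helpers

variable {F K : Type*} [Field F] [Fintype F] [Field K] [Algebra F K]

lemma fr_iter (n : ℕ) (x : K) : (fr F K)^[n] x = x ^ (Fintype.card F ^ n) := by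
  rw [FiniteField.coe_frobeniusAlgHom, pow_iterate]

lemma Lm_fr (σ : F) (n : ℕ) (x : K) : (fr F K)^[n] (Lm K σ x) = Lm K σ ((fr F K)^[n] x) := by
  induction n generalizing x with
  | zero => rfl
  | succ k ih =>
    rw [Function.iterate_succ_apply, Function.iterate_succ_apply, ← ih]
    congr 1
    simp only [Lm, map_sub, map_mul, map_pow, AlgHom.commutes]

lemma Lm_add [CharP K 3] (σ : F) (x y : K) : Lm K σ (x + y) = Lm K σ x + Lm K σ y := by
  have : Fact (Nat.Prime 3) := ⟨Nat.prime_three⟩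
  simp only [Lm, add_pow_char x y (p := 3)]; ring

lemma Lm_sub [CharP K 3] (σ : F) (x y : K) : Lm K σ (x - y) = Lm K σ x - Lm K σ y := by
  have h := Lm_add σ (x - y) y
  rw [sub_add_cancel] at h
  rw [h]; ring

lemma Lm_ker {σ : F} {s : K} (hs : s ^ 2 = algebraMap F K σ) (c : K) :
    Lm K σ c = 0 ↔ c = 0 ∨ c = s ∨ c = -s := by
  have : Lm K σ c = c * ((c - s) * (c + s)) := by simp only [Lm, ← hs]; ring
  rw [this, mul_eq_zero, mul_eq_zero, sub_eq_zero, add_eq_zero_iff_eq_neg]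

lemma deg_dvd_iff (x : K) (hx : IsIntegral F x) (n : ℕ) :
    (minpoly F x).natDegree ∣ n ↔ (fr F K)^[n] x = x := by
  rw [(minpoly.irreducible hx).natDegree_dvd_iff_dvd_X_pow_card_pow_sub_X, minpoly.dvd_iff,
    fr_iter, Nat.card_eq_fintype_card]
  simp [sub_eq_zero]

/-- Frobenius negates `s`. -/
lemma fr_s {σ : F} (hσ : ¬ IsSquare σ) {s : K} (hs : s ^ 2 = algebraMap F K σ) :
    fr F K s = -s := by
  have h2 : (fr F K s) ^ 2 = s ^ 2 := by
    rw [← map_pow, hs, AlgHom.commutes]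
  rcases sq_eq_sq_iff_eq_or_eq_neg.mp h2 with h | h
  · exfalso
    apply hσ
    have hIntg : IsIntegral F s := by
      apply IsIntegral.of_pow (n := 2) (by norm_num)
      rw [hs]; exact isIntegral_algebraMap
    have h1 := Nat.dvd_one.mp ((deg_dvd_iff s hIntg 1).mpr h)
    obtain ⟨t, ht⟩ := minpoly.natDegree_eq_one_iff.mp h1
    refine ⟨t, (algebraMap F K).injective ?_⟩
    rw [map_mul, ht, ← hs, sq]
  · exact h

lemma fr_s_odd {σ : F} (hσ : ¬ IsSquare σ) {s : K} (hs : s ^ 2 = algebraMap F K σ) (n : ℕ) :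
    (fr F K)^[n] s = (-1) ^ n * s := by
  induction n with
  | zero => simp
  | succ k ih =>
    rw [Function.iterate_succ_apply', ih, map_mul, fr_s hσ hs, map_pow, map_neg, map_one]; ring

lemma iter_shift {d : ℕ} {b c : K} (h : (fr F K)^[d] b = b + c) (hc : (fr F K)^[d] c = c) (j : ℕ) :
    (fr F K)^[d * j] b = b + j * c := by
  induction j with
  | zero => simp
  | succ k ih =>
    have hc' : (fr F K)^[d * k] c = c := by
      rw [Function.iterate_mul]; exact Function.iterate_fixed hc k
    rw [Nat.mul_succ, Function.iterate_add_apply, h, iterate_map_add, ih, hc']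
    push_cast; ring

/-- The finset of fixed points of `φ ^ n`. -/
noncomputable def Tn (F K : Type*) [Field F] [Fintype F] [Field K] [Algebra F K] (n : ℕ) :
    Finset K := by
  classical
  exact ((X ^ (Fintype.card F ^ n) - X : F[X]).rootSet K).toFinset

lemma mem_Tn {n : ℕ} (hn : n ≠ 0) (x : K) : x ∈ Tn F K n ↔ (fr F K)^[n] x = x := by
  have h0 := FiniteField.X_pow_card_pow_sub_X_ne_zero F hn (Fintype.one_lt_card (α := F))
  rw [Tn, Set.mem_toFinset, mem_rootSet, fr_iter]
  simp [h0, sub_eq_zero]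

lemma card_Tn [IsAlgClosed K] {n : ℕ} (hn : n ≠ 0) : (Tn F K n).card = Fintype.card F ^ n := by
  rw [Tn, Set.toFinset_card, card_rootSet_eq_natDegree]
  · exact FiniteField.X_pow_card_pow_sub_X_natDegree_eq F hn (Fintype.one_lt_card (α := F))
  · apply galois_poly_separable (ringChar F)
    obtain ⟨k, hp, hk⟩ := FiniteField.card F (ringChar F)
    rw [hk, ← pow_mul]
    exact dvd_pow_self _ (by simp [hn])
  · exact IsAlgClosed.splits _

/-- No good elements for odd `d`. -/
lemma not_good_odd [CharP K 3] [IsAlgClosed K] {σ : F} (hσ : ¬ IsSquare σ) {d : ℕ} (hd : Odd d)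
    (a : K) : ¬ Good K σ d a := by
  rintro ⟨h1, h2⟩
  have hd0 : d ≠ 0 := by rintro rfl; simp at hd
  obtain ⟨s, hs⟩ := IsAlgClosed.exists_pow_nat_eq (algebraMap F K σ) (n := 2) (by norm_num)
  have hs0 : s ≠ 0 := by
    rintro rfl
    apply hσ
    have : σ = 0 := by
      apply (algebraMap F K).injective; rw [← hs]; simp
    exact ⟨0, by simp [this]⟩
  have hsd : (fr F K)^[d] s = -s := by rw [fr_s_odd hσ hs, hd.neg_one_pow]; ring
  have hnn : s ≠ -s := by
    intro h
    have h2 : (3 : K) = 0 := by exact_mod_cast CharP.cast_eq_zero K 3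
    apply hs0
    linear_combination h2 * s - h
  have hmaps : ∀ x ∈ Tn F K d, Lm K σ x ∈ Tn F K d := by
    intro x hx
    rw [mem_Tn hd0] at *
    rw [Lm_fr, hx]
  have hinj : Set.InjOn (Lm K σ) (Tn F K d : Set K) := by
    intro x hx y hy hxy
    rw [Finset.mem_coe, mem_Tn hd0] at hx hy
    have h : Lm K σ (x - y) = 0 := by rw [Lm_sub, hxy, sub_self]
    have hf : (fr F K)^[d] (x - y) = x - y := by rw [iterate_map_sub, hx, hy]
    rcases (Lm_ker hs _).mp h with h | h | h
    · exact sub_eq_zero.mp h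
    · rw [h, hsd] at hf; exact absurd hf.symm hnn
    · rw [h, iterate_map_neg, hsd, neg_neg] at hf; exact absurd hf hnn
  obtain ⟨b, hb, hba⟩ := Finset.surj_on_of_inj_on_of_card_le (s := Tn F K d) (t := Tn F K d)
    (fun x _ => Lm K σ x) (fun x hx => hmaps x hx) (fun x y hx hy h => hinj hx hy h) le_rfl a
    ((mem_Tn hd0 a).mpr h1)
  exact h2 b hba.symm ((mem_Tn hd0 b).mp hb)

lemma Lm_surj [IsAlgClosed K] (σ : F) (a : K) : ∃ b, Lm K σ b = a := by
  have hdeg : (X ^ 3 - C (algebraMap F K σ) * X - C a : K[X]).natDegree = 3 := by compute_degree!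
  obtain ⟨b, hb⟩ := IsAlgClosed.exists_root (X ^ 3 - C (algebraMap F K σ) * X - C a : K[X])
    (by intro h; have := natDegree_eq_of_degree_eq_some (n := 0) h; omega)
  refine ⟨b, ?_⟩
  simpa [IsRoot, sub_eq_zero, Lm] using hb

/-- Key dichotomy for even `d`. -/
lemma good_even_iff [CharP K 3] [IsAlgClosed K] {σ : F} (hσ : ¬ IsSquare σ) {d : ℕ} (hd : Even d)
    {a : K} (ha : (fr F K)^[d] a = a) {b : K} (hb : Lm K σ b = a) (j : ℕ) :
    (fr F K)^[d * j] b ≠ b ↔ (Good K σ d a ∧ ¬ 3 ∣ j) := by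
  obtain ⟨s, hs⟩ := IsAlgClosed.exists_pow_nat_eq (algebraMap F K σ) (n := 2) (by norm_num)
  have hsd : (fr F K)^[d] s = s := by rw [fr_s_odd hσ hs, hd.neg_one_pow]; ring
  have key : ∀ c, Lm K σ c = 0 → (fr F K)^[d] c = c := by
    intro c hc
    rcases (Lm_ker hs _).mp hc with h | h | h
    · rw [h, iterate_map_zero]
    · rw [h, hsd]
    · rw [h, iterate_map_neg, hsd]
  have hgood : Good K σ d a ↔ (fr F K)^[d] b ≠ b := by
    refine ⟨fun h => h.2 b hb, fun h => ⟨ha, fun b' hb' hfix => h ?_⟩⟩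
    have h0 : Lm K σ (b - b') = 0 := by rw [Lm_sub, hb, hb', sub_self]
    have := key _ h0
    rw [iterate_map_sub, hfix] at this
    simpa using this
  have hc0 : Lm K σ ((fr F K)^[d] b - b) = 0 := by
    rw [Lm_sub, ← Lm_fr, hb, ha, sub_self]
  have := iter_shift (b := b) (c := (fr F K)^[d] b - b) (by ring) (key _ hc0) j
  rw [this, hgood, ne_eq, add_eq_left, mul_eq_zero, CharP.cast_eq_zero_iff K 3, sub_eq_zero]
  tauto

/-- Good set restricts correctly. -/
lemma good_mul_iff [CharP K 3] [IsAlgClosed K] {σ : F} (hσ : ¬ IsSquare σ) {d : ℕ} (hd : Even d)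
    {a : K} (ha : (fr F K)^[d] a = a) (j : ℕ) :
    Good K σ (d * j) a ↔ (Good K σ d a ∧ ¬ 3 ∣ j) := by
  have hfix : (fr F K)^[d * j] a = a := by
    rw [Function.iterate_mul]; exact Function.iterate_fixed ha j
  constructor
  · intro h
    obtain ⟨b, hb⟩ := Lm_surj (K := K) σ a
    exact (good_even_iff hσ hd ha hb j).mp (h.2 b hb)
  · intro h
    exact ⟨hfix, fun b hb => (good_even_iff hσ hd ha hb j).mpr h⟩

lemma card_good [CharP K 3] [IsAlgClosed K] {σ : F} (hσ : ¬ IsSquare σ) {d : ℕ} (hd : Even d)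
    (hd0 : d ≠ 0) [DecidablePred (Good K σ d)] :
    3 * ((Tn F K d).filter (Good K σ d)).card = 2 * Fintype.card F ^ d := by
  classical
  obtain ⟨s, hs⟩ := IsAlgClosed.exists_pow_nat_eq (algebraMap F K σ) (n := 2) (by norm_num)
  have hs0 : s ≠ 0 := by
    rintro rfl
    apply hσ
    have : σ = 0 := by
      apply (algebraMap F K).injective; rw [← hs]; simp
    exact ⟨0, by simp [this]⟩
  have hnn : s ≠ -s := by
    intro h
    have h2 : (3 : K) = 0 := by exact_mod_cast CharP.cast_eq_zero K 3
    apply hs0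
    linear_combination h2 * s - h
  have hsd : (fr F K)^[d] s = s := by rw [fr_s_odd hσ hs, hd.neg_one_pow]; ring
  have hker : ∀ c, Lm K σ c = 0 → (fr F K)^[d] c = c := by
    intro c hc
    rcases (Lm_ker hs _).mp hc with h | h | h
    · rw [h, iterate_map_zero]
    · rw [h, hsd]
    · rw [h, iterate_map_neg, hsd]
  have hfib : (Tn F K d).card = ((Tn F K d).filter (fun a => ¬ Good K σ d a)).card * 3 := by
    rw [Finset.card_eq_sum_card_fiberwise (f := Lm K σ)
      (t := (Tn F K d).filter (fun a => ¬ Good K σ d a)), Finset.sum_const_nat]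
    · intro a ha
      rw [Finset.mem_filter, mem_Tn hd0] at ha
      obtain ⟨ha1, ha2⟩ := ha
      have : ∃ b, Lm K σ b = a ∧ (fr F K)^[d] b = b := by
        by_contra! hcon
        exact ha2 ⟨ha1, hcon⟩
      obtain ⟨b, hb, hbf⟩ := this
      have : (Tn F K d).filter (fun x => Lm K σ x = a) = {b, b + s, b + -s} := by
        ext x
        rw [Finset.mem_filter, mem_Tn hd0]
        simp only [Finset.mem_insert, Finset.mem_singleton]
        have e : (x = b ∨ x = b + s ∨ x = b + -s) ↔ Lm K σ (x - b) = 0 := by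
          rw [Lm_ker hs, sub_eq_zero, sub_eq_iff_eq_add', sub_eq_iff_eq_add']
        rw [e, Lm_sub, hb, sub_eq_zero]
        refine ⟨fun h => h.2, fun h => ⟨?_, h⟩⟩
        have h0 : Lm K σ (x - b) = 0 := by rw [Lm_sub, hb, h, sub_self]
        have := hker _ h0
        rw [iterate_map_sub, hbf] at this
        simpa using this
      rw [this]
      rw [Finset.card_eq_three]
      refine ⟨b, b + s, b + -s, ?_, ?_, ?_, rfl⟩
      · simpa using hs0
      · simpa using hs0
      · simpa using hnn
    · intro x hx
      rw [Finset.mem_coe, mem_Tn hd0] at hx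
      rw [Finset.mem_coe, Finset.mem_filter, mem_Tn hd0]
      refine ⟨by rw [Lm_fr, hx], fun h => h.2 x rfl hx⟩
  have hsum := Finset.card_filter_add_card_filter_not (s := Tn F K d) (Good K σ d)
  rw [card_Tn hd0] at hfib hsum
  omega

lemma ratTransform_eq (σ : F) (f : F[X]) :
    ratTransform (X ^ 3 - C σ * X) 1 f = f.comp (X ^ 3 - C σ * X) := by
  simp [ratTransform, comp, eval₂_eq_sum_range]

lemma good_iff_irred [CharP K 3] [IsAlgClosed K] [Algebra.IsAlgebraic F K] {σ : F}
    (hσ : ¬ IsSquare σ) {d : ℕ} (a : K) (hd : (minpoly F a).natDegree = d) :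
    Good K σ d a ↔ minpoly F a ∈ IrredSet (X ^ 3 - C σ * X) 1 d := by
  have hIntg : ∀ x : K, IsIntegral F x := fun x => Algebra.IsIntegral.isIntegral x
  have hg : (X ^ 3 - C σ * X : F[X]).natDegree = 3 := by compute_degree!
  have hgm : (X ^ 3 - C σ * X : F[X]).Monic := by monicity!
  have hd0 : 0 < d := hd ▸ minpoly.natDegree_pos (hIntg a)
  have hcm : ((minpoly F a).comp (X ^ 3 - C σ * X)).Monic :=
    (minpoly.monic (hIntg a)).comp hgm (by omega)
  have hcd : ((minpoly F a).comp (X ^ 3 - C σ * X)).natDegree = d * 3 := by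
    rw [natDegree_comp, hd, hg]
  have hroot : ∀ b : K, Lm K σ b = a → aeval b ((minpoly F a).comp (X ^ 3 - C σ * X)) = 0 := by
    intro b hb
    rw [aeval_comp]
    have : aeval b (X ^ 3 - C σ * X : F[X]) = a := by
      rw [← hb]; simp [Lm]
    rw [this, minpoly.aeval]
  simp only [IrredSet, Set.mem_ofPred_eq, ratTransform_eq]
  constructor
  · intro h
    refine ⟨minpoly.monic (hIntg a), minpoly.irreducible (hIntg a), hd, ?_⟩
    obtain ⟨b, hb⟩ := Lm_surj (K := K) σ a
    have hev : Even d := by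
      rw [← Nat.not_odd_iff_even]
      exact fun ho => not_good_odd hσ ho a h
    set m := (minpoly F b).natDegree with hm
    have hbm : (fr F K)^[m] b = b := (deg_dvd_iff b (hIntg b) m).mp dvd_rfl
    have ham : (fr F K)^[m] a = a := by rw [← hb, Lm_fr, hbm]
    obtain ⟨j, hj⟩ : d ∣ m := by
      rw [← hd, deg_dvd_iff a (hIntg a)]; exact ham
    have h3 : 3 ∣ j := by
      by_contra h3
      exact (good_even_iff hσ hev h.1 hb j).mpr ⟨h, h3⟩ (hj ▸ hbm)
    have hm0 : 0 < m := minpoly.natDegree_pos (hIntg b)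
    have hle : d * 3 ≤ m := by
      rw [hj]
      apply Nat.mul_le_mul_left
      apply Nat.le_of_dvd _ h3
      rcases Nat.eq_zero_or_pos j with rfl | h
      · omega
      · exact h
    have heq : minpoly F b = (minpoly F a).comp (X ^ 3 - C σ * X) := by
      symm
      apply eq_of_monic_of_dvd_of_natDegree_le (minpoly.monic (hIntg b)) hcm
        (minpoly.dvd _ _ (hroot b hb))
      omega
    rw [← heq]
    exact minpoly.irreducible (hIntg b)
  · rintro ⟨-, -, -, h⟩
    refine ⟨(deg_dvd_iff a (hIntg a) d).mp (hd ▸ dvd_rfl), fun b hb hfix => ?_⟩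
    have heq := minpoly.eq_of_irreducible_of_monic h (hroot b hb) hcm
    have := (deg_dvd_iff b (hIntg b) d).mpr hfix
    rw [← heq, hcd] at this
    have := Nat.le_of_dvd hd0 this
    omega

/-- Elements of exact degree `d` which are good. -/
noncomputable def Dn {F : Type*} (K : Type*) [Field F] [Fintype F] [Field K] [Algebra F K] (σ : F)
    (d : ℕ) : Finset K := by
  classical
  exact (Tn F K d).filter (fun a => (minpoly F a).natDegree = d ∧ Good K σ d a)

lemma mem_Dn {σ : F} {d : ℕ} (hd : d ≠ 0) (a : K) :
    a ∈ Dn K σ d ↔ (minpoly F a).natDegree = d ∧ Good K σ d a := by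
  simp only [Dn, Finset.mem_filter, mem_Tn hd]
  exact ⟨fun h => h.2, fun h => ⟨h.2.1, h⟩⟩

lemma card_Dn [CharP K 3] [IsAlgClosed K] [Algebra.IsAlgebraic F K] {σ : F}
    (hσ : ¬ IsSquare σ) {d : ℕ} (hd : d ≠ 0) :
    (Dn K σ d).card = (IrredSet (X ^ 3 - C σ * X) 1 d).ncard * d := by
  classical
  have hIntg : ∀ x : K, IsIntegral F x := fun x => Algebra.IsIntegral.isIntegral x
  have himg : IrredSet (X ^ 3 - C σ * X) 1 d = ((Dn K σ d).image (minpoly F) : Set F[X]) := by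
    ext f
    rw [Finset.mem_coe, Finset.mem_image]
    constructor
    · intro hf
      obtain ⟨a, ha⟩ := IsAlgClosed.exists_aeval_eq_zero K f
        (by rw [degree_eq_natDegree hf.1.ne_zero, hf.2.2.1]; exact_mod_cast hd)
      have hm := minpoly.eq_of_irreducible_of_monic hf.2.1 ha hf.1
      have hdeg : (minpoly F a).natDegree = d := by rw [← hm, hf.2.2.1]
      exact ⟨a, (mem_Dn hd a).mpr ⟨hdeg, (good_iff_irred hσ a hdeg).mpr (hm ▸ hf)⟩, hm.symm⟩
    · rintro ⟨a, ha, rfl⟩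
      rw [mem_Dn hd] at ha
      exact (good_iff_irred hσ a ha.1).mp ha.2
  rw [himg, Set.ncard_coe_finset, Finset.card_eq_sum_card_image (minpoly F), Finset.sum_const_nat]
  intro f hf
  have hf' : f ∈ IrredSet (X ^ 3 - C σ * X) 1 d := by rw [himg]; exact hf
  have : (Dn K σ d).filter (fun a => minpoly F a = f) = (f.rootSet K).toFinset := by
    ext a
    rw [Finset.mem_filter, mem_Dn hd, Set.mem_toFinset, mem_rootSet]
    constructor
    · rintro ⟨-, rfl⟩
      exact ⟨hf'.1.ne_zero, minpoly.aeval _ _⟩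
    · rintro ⟨-, ha⟩
      have hm := minpoly.eq_of_irreducible_of_monic hf'.2.1 ha hf'.1
      have hdeg : (minpoly F a).natDegree = d := by rw [← hm, hf'.2.2.1]
      exact ⟨⟨hdeg, (good_iff_irred hσ a hdeg).mpr (hm ▸ hf')⟩, hm.symm⟩
  rw [this, Set.toFinset_card, card_rootSet_eq_natDegree, hf'.2.2.1]
  · exact PerfectField.separable_of_irreducible hf'.2.1
  · exact IsAlgClosed.splits _

/-- Partition by degree. -/
lemma sum_Dn [CharP K 3] [IsAlgClosed K] [Algebra.IsAlgebraic F K] {σ : F}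
    (hσ : ¬ IsSquare σ) (k e : ℕ) (he : 0 < e) (he3 : ¬ 3 ∣ e) :
    3 * ∑ i ∈ e.divisors, (Dn K σ (2 * 3 ^ k * i)).card
      = 2 * Fintype.card F ^ (2 * 3 ^ k * e) := by
  classical
  have hIntg : ∀ x : K, IsIntegral F x := fun x => Algebra.IsIntegral.isIntegral x
  have hN0 : 2 * 3 ^ k * e ≠ 0 := by positivity
  have hev : ∀ i, Even (2 * 3 ^ k * i) := fun i => by
    rw [mul_assoc]; exact even_two_mul _
  rw [← card_good (K := K) hσ (hev e) hN0]
  congr 1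
  rw [← Finset.card_biUnion]
  · congr 1
    ext a
    rw [Finset.mem_biUnion, Finset.mem_filter, mem_Tn hN0]
    constructor
    · rintro ⟨i, hi, ha⟩
      obtain ⟨⟨j, rfl⟩, -⟩ := Nat.mem_divisors.mp hi
      have hi0 : 2 * 3 ^ k * i ≠ 0 := by
        have : i ≠ 0 := by rintro rfl; simp at he
        positivity
      rw [mem_Dn hi0] at ha
      have hj : ¬ 3 ∣ j := fun h => he3 (h.mul_left i)
      have hg := (good_mul_iff hσ (hev i) ha.2.1 j).mpr ⟨ha.2, hj⟩
      rw [mul_assoc] at hg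
      exact ⟨hg.1, hg⟩
    · rintro ⟨h1, h2⟩
      set d := (minpoly F a).natDegree with hd
      have hdpos : 0 < d := minpoly.natDegree_pos (hIntg a)
      have had : (fr F K)^[d] a = a := (deg_dvd_iff a (hIntg a) d).mp dvd_rfl
      obtain ⟨j, hj⟩ : d ∣ 2 * 3 ^ k * e := (deg_dvd_iff a (hIntg a) _).mpr h1
      have hdev : Even d := by
        rw [← Nat.not_odd_iff_even]
        intro ho
        have hng := not_good_odd hσ ho a
        apply hng
        refine ⟨had, fun b hb hfix => ?_⟩
        refine h2.2 b hb ?_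
        rw [hj, Function.iterate_mul]; exact Function.iterate_fixed hfix j
      have h2' := h2
      rw [hj, good_mul_iff hσ hdev had j] at h2'
      obtain ⟨hgd, h3j⟩ := h2'
      have hcop : Nat.Coprime (3 ^ k) j :=
        Nat.Coprime.pow_left k ((Nat.Prime.coprime_iff_not_dvd Nat.prime_three).mpr h3j)
      have h3d : 3 ^ k ∣ d := by
        apply hcop.dvd_of_dvd_mul_right
        rw [← hj]
        exact ⟨2 * e, by ring⟩
      have hkd : 2 * 3 ^ k ∣ d := by
        apply Nat.Coprime.mul_dvd_of_dvd_of_dvd _ hdev.two_dvd h3d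
        exact Nat.Coprime.pow_right k (by norm_num)
      obtain ⟨i, hi⟩ := hkd
      refine ⟨i, ?_, ?_⟩
      · rw [Nat.mem_divisors]
        refine ⟨⟨j, ?_⟩, he.ne'⟩
        rw [hi, mul_assoc (2 * 3 ^ k) i j] at hj
        exact Nat.eq_of_mul_eq_mul_left (by positivity) hj
      · rw [← hi, mem_Dn hdpos.ne']
        exact ⟨hd.symm, hgd⟩
  · intro i hi i' hi' hne
    rw [Function.onFun, Finset.disjoint_left]
    intro a ha ha'
    have p : ∀ i ∈ e.divisors, 2 * 3 ^ k * i ≠ 0 := fun i hi => by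
      have := Nat.pos_of_mem_divisors hi
      positivity
    rw [mem_Dn (p _ hi)] at ha
    rw [mem_Dn (p _ hi')] at ha'
    apply hne
    exact Nat.eq_of_mul_eq_mul_left (by positivity : 0 < 2 * 3 ^ k) (ha.1.symm.trans ha'.1)

end helpers

/-- Theorem 14: over `F_q` of characteristic three, for a nonsquare `σ`,
`|𝓘(x³−σx, 1, n, q)| = (1/(3n₃)) I(n/(2n₃), q^{2n₃})`; in particular it vanishes
when `n/n₃` is odd. -/
theorem stmt14 {F : Type*} [Field F] [Fintype F] (q : ℕ) (hq : Fintype.card F = q)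
    (hchar : ringChar F = 3) (σ : F) (hσ : ¬ IsSquare σ) (n : ℕ) (hn : 1 < n) :
    ((IrredSet (X ^ 3 - C σ * X) 1 n).ncard : ℚ) =
        (1 / (3 * (nThree n : ℚ))) * IfunD n (2 * nThree n) ((q : ℚ) ^ (2 * nThree n)) ∧
      (Odd (n / nThree n) → (IrredSet (X ^ 3 - C σ * X) 1 n).ncard = 0) := by
  have hF : CharP F 3 := by rw [← hchar]; exact ringChar.charP F
  have hK : CharP (AlgebraicClosure F) 3 := charP_of_injective_algebraMap
    (algebraMap F (AlgebraicClosure F)).injective 3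
  have hn0 : n ≠ 0 := by omega
  set k := n.factorization 3 with hk
  have hnt : nThree n = 3 ^ k := rfl
  have hsplit : 3 ^ k * (n / 3 ^ k) = n := Nat.ordProj_mul_ordCompl_eq_self n 3
  have hnd : ¬ 3 ∣ n / 3 ^ k := Nat.not_dvd_ordCompl Nat.prime_three hn0
  have hodd3 : Odd (3 ^ k) := Odd.pow (by decide)
  have hzero : Odd n → (IrredSet (X ^ 3 - C σ * X) 1 n).ncard = 0 := by
    intro ho
    have h1 := card_Dn (K := AlgebraicClosure F) hσ hn0
    have h2 : Dn (AlgebraicClosure F) σ n = ∅ := by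
      rw [Finset.eq_empty_iff_forall_notMem]
      intro a ha
      rw [mem_Dn hn0] at ha
      exact not_good_odd hσ ho a ha.2
    rw [h2, Finset.card_empty] at h1
    rcases Nat.mul_eq_zero.mp h1.symm with h | h
    · exact h
    · exact absurd h hn0
  rw [hnt]
  refine ⟨?_, fun ho => hzero ?_⟩
  swap
  · rw [← hsplit]; exact hodd3.mul ho
  unfold IfunD
  split_ifs with hdvd
  · obtain ⟨m, hm⟩ := hdvd
    have hm0 : 0 < m := Nat.pos_of_ne_zero (by rintro rfl; omega)
    have hm3 : ¬ 3 ∣ m := by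
      intro h
      apply hnd
      have : n / 3 ^ k = 2 * m := by
        rw [hm, mul_comm 2, mul_assoc]; exact Nat.mul_div_cancel_left _ (by positivity)
      rw [this]; exact h.mul_left 2
    have hdiv : n / (2 * 3 ^ k) = m := by
      rw [hm]; exact Nat.mul_div_cancel_left _ (by positivity)
    rw [hdiv]
    have hmob := (ArithmeticFunction.sum_eq_iff_sum_mul_moebius_eq_on (R := ℚ)
      (f := fun i => ((Dn (AlgebraicClosure F) σ (2 * 3 ^ k * i)).card : ℚ))
      (g := fun i => (2 / 3 : ℚ) * (q : ℚ) ^ (2 * 3 ^ k * i))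
      {i | ¬ 3 ∣ i} (fun a b hab hb h => hb (h.trans hab))).mp (by
        intro e he he3
        have := sum_Dn (K := AlgebraicClosure F) hσ k e he he3
        rw [hq] at this
        have h' : (3 : ℚ) * ∑ i ∈ e.divisors, ((Dn (AlgebraicClosure F) σ (2 * 3 ^ k * i)).card : ℚ)
          = 2 * (q : ℚ) ^ (2 * 3 ^ k * e) := by exact_mod_cast this
        linarith) m hm0 hm3
    rw [← hm, card_Dn hσ hn0] at hmob
    rw [Nat.sum_divisorsAntidiagonal
      (f := fun a b => ((ArithmeticFunction.moebius a : ℤ) : ℚ) * ((2 / 3 : ℚ) * (q : ℚ) ^ (2 * 3 ^ k * b)))]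
      at hmob
    have hS : ∑ d ∈ m.divisors, ((ArithmeticFunction.moebius d : ℤ) : ℚ) *
        ((2 / 3 : ℚ) * (q : ℚ) ^ (2 * 3 ^ k * (m / d))) = (2 / 3 : ℚ) *
        ∑ d ∈ m.divisors, ((ArithmeticFunction.moebius d : ℤ) : ℚ) *
          ((q : ℚ) ^ (2 * 3 ^ k)) ^ (m / d) := by
      rw [Finset.mul_sum]
      refine Finset.sum_congr rfl fun d _ => ?_
      rw [pow_mul]; ring
    rw [hS] at hmob
    unfold Ifun
    set S := ∑ d ∈ m.divisors, ((ArithmeticFunction.moebius d : ℤ) : ℚ) *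
          ((q : ℚ) ^ (2 * 3 ^ k)) ^ (m / d)
    have hnq : (n : ℚ) = 2 * 3 ^ k * m := by exact_mod_cast hm
    push_cast at hmob ⊢
    rw [hnq] at hmob
    have hmq : (m : ℚ) ≠ 0 := by exact_mod_cast hm0.ne'
    field_simp
    linarith
  · rw [mul_zero, hzero, Nat.cast_zero]
    rw [← Nat.not_even_iff_odd]
    intro hev
    apply hdvd
    apply Nat.Coprime.mul_dvd_of_dvd_of_dvd _ hev.two_dvd ⟨_, hsplit.symm⟩
    exact Nat.Coprime.pow_right k (by norm_num)
end

section
/- Let F_q be a finite field of characteristic two, let σ ∈ F_q have absolute trace 1 (i.e. Tr_{F_q/F_2}(σ) = 1), and let n > 1 be an integer. If q ≡ 1 (mod 3), then |𝓘(x^3 + σx + σ, x^2 + x + σ + 1, n, q)| = (1/(3 n_3)) (I(n/(2n_3), q^{2 n_3}) − I(n/(2n_3), 1)). If q ≡ −1 (mod 3), then |𝓘(x^3 + σx + σ, x^2 + x + σ + 1, n, q)| = (2/(3 n_3)) (I(n/n_3, q^{n_3}) − I(n/n_3, −1)). -/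
open Polynomial

set_option linter.unusedSectionVars false
set_option linter.style.haveILetI false

section Aux

variable {F K : Type*} [Field F] [Fintype F] [CharP F 2] [Field K] [Algebra F K]

theorem aux_deg_dvd [Algebra.IsAlgebraic F K] (x : K) (k : ℕ) :
    (minpoly F x).natDegree ∣ k ↔ x ^ (Fintype.card F ^ k) = x := by
  have hIntg : IsIntegral F x := (Algebra.IsAlgebraic.isAlgebraic x).isIntegral
  have := Irreducible.natDegree_dvd_iff_dvd_X_pow_card_pow_sub_X (n := k) (minpoly.irreducible hIntg)
  rw [this, minpoly.dvd_iff, Nat.card_eq_fintype_card]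
  simp [sub_eq_zero]

theorem aux_card : ∃ r : ℕ, Fintype.card F = 2 ^ r := by
  obtain ⟨r, _, h⟩ := FiniteField.card F 2
  exact ⟨r, h⟩

theorem aux_add_pow [CharP K 2] (x y : K) (k : ℕ) :
    (x + y) ^ (Fintype.card F ^ k) = x ^ (Fintype.card F ^ k) + y ^ (Fintype.card F ^ k) := by
  obtain ⟨r, h⟩ := aux_card (F := F)
  rw [h, ← pow_mul]
  exact add_pow_char_pow x y _ _

theorem aux_alg_pow (a : F) (k : ℕ) :
    (algebraMap F K a) ^ (Fintype.card F ^ k) = algebraMap F K a := by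
  rw [← map_pow, FiniteField.pow_card_pow]

theorem aux_theta_iter [CharP K 2] (σ : F) (t : K) (ht : t ^ 2 + t + algebraMap F K σ = 0) (k : ℕ) :
    t ^ (2 ^ k) = t + algebraMap F K (∑ i ∈ Finset.range k, σ ^ (2 ^ i)) := by
  have h2 : (2 : K) = 0 := CharTwo.two_eq_zero
  induction k with
  | zero => simp
  | succ k ih =>
    rw [Finset.sum_range_succ, pow_succ', pow_mul]
    have : t ^ 2 = t + algebraMap F K σ := by
      linear_combination ht - (t + algebraMap F K σ) * h2
    rw [this, add_pow_char_pow, ih, map_add, map_pow, add_assoc]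

theorem aux_theta [CharP K 2] [IsAlgClosed K] (σ : F)
    (hσ : letI : Algebra (ZMod 2) F := ZMod.algebra F 2
          Algebra.trace (ZMod 2) F σ = 1) :
    ∃ t : K, t ^ 2 + t + algebraMap F K σ = 0 ∧ t ^ Fintype.card F = t + 1 := by
  letI : Algebra (ZMod 2) F := ZMod.algebra F 2
  have hσ' : Algebra.trace (ZMod 2) F σ = 1 := hσ
  obtain ⟨t, ht⟩ := IsAlgClosed.exists_root (X ^ 2 + X + C (algebraMap F K σ) : K[X])
    (by have : (X ^ 2 + X + C (algebraMap F K σ) : K[X]).degree = 2 := by compute_degree!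
        rw [this]; decide)
  have ht' : t ^ 2 + t + algebraMap F K σ = 0 := by simpa using ht
  refine ⟨t, ht', ?_⟩
  have h1 := FiniteField.algebraMap_trace_eq_sum_pow (ZMod 2) F σ
  have h3 : Fintype.card F = 2 ^ Module.finrank (ZMod 2) F := by
    rw [Module.card_eq_pow_finrank (K := ZMod 2), ZMod.card]
  rw [h3, aux_theta_iter σ t ht']
  rw [hσ', map_one, Nat.card_eq_fintype_card, ZMod.card] at h1
  rw [← h1, map_one]

theorem aux_theta_pow [CharP K 2] {t : K} (ht : t ^ Fintype.card F = t + 1) (d : ℕ) :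
    t ^ (Fintype.card F ^ d) = if Even d then t else t + 1 := by
  have h2 : (2 : K) = 0 := CharTwo.two_eq_zero
  induction d with
  | zero => simp
  | succ k ih =>
    rw [pow_succ, pow_mul, ih]
    have h1 : (t + 1) ^ Fintype.card F = t := by
      have := aux_add_pow (F := F) t 1 1
      simp only [pow_one, one_pow, ht] at this
      rw [this]; linear_combination h2
    by_cases h : Even k
    · simp [h, Nat.even_add_one, ht]
    · simp [h, Nat.even_add_one, h1]

/-- The Moebius coordinate. -/
noncomputable def auxB (t a : K) : K := (a + t) / (a + t + 1)

theorem auxB_ne_zero {t a : K} : auxB t a ≠ 0 ↔ a + t ≠ 0 ∧ a + t + 1 ≠ 0 := by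
  simp [auxB]

theorem auxB_inj {t a b : K} (ha : auxB t a ≠ 0) (hb : auxB t b ≠ 0) (h : auxB t a = auxB t b) :
    a = b := by
  rw [auxB_ne_zero] at ha hb
  unfold auxB at h
  rw [div_eq_div_iff ha.2 hb.2] at h
  linear_combination h

theorem auxB_ne_one {t a : K} (ha : auxB t a ≠ 0) : auxB t a ≠ 1 := by
  rw [auxB_ne_zero] at ha
  unfold auxB
  rw [Ne, div_eq_one_iff_eq ha.2]
  intro h
  exact one_ne_zero (α := K) (by linear_combination -h)

theorem auxB_surj [CharP K 2] {t b : K} (hb0 : b ≠ 0) (hb1 : b ≠ 1) : ∃ a, auxB t a = b := by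
  have h2 : (2 : K) = 0 := CharTwo.two_eq_zero
  have hb : b + 1 ≠ 0 := fun h => hb1 (by linear_combination h - h2)
  refine ⟨(b * (t + 1) + t) / (b + 1), ?_⟩
  have e1 : (b * (t + 1) + t) / (b + 1) + t = b / (b + 1) := by
    field_simp; linear_combination (b * t + t) * h2
  have e2 : (b * (t + 1) + t) / (b + 1) + t + 1 = 1 / (b + 1) := by
    rw [e1]; field_simp; linear_combination b * h2
  rw [auxB, e2, e1]; field_simp

/-- Fixed by Frobenius in terms of the coordinate. -/
theorem auxB_pow [CharP K 2] {t a : K} (ht : t ^ Fintype.card F = t + 1) (d : ℕ) :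
    auxB t a ^ (Fintype.card F ^ d) =
      if Even d then auxB t (a ^ (Fintype.card F ^ d))
      else (auxB t (a ^ (Fintype.card F ^ d)))⁻¹ := by
  have h2 : (2 : K) = 0 := CharTwo.two_eq_zero
  unfold auxB
  rw [div_pow, aux_add_pow, aux_add_pow, aux_add_pow, aux_theta_pow ht, one_pow]
  split_ifs with h
  · rfl
  · rw [inv_div]
    congr 1
    · ring
    · linear_combination h2

def auxM (q d : ℕ) : ℕ := if Even d then q ^ d - 1 else q ^ d + 1

theorem aux_fix_iff [CharP K 2] {t a : K} (ht : t ^ Fintype.card F = t + 1) (d : ℕ)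
    (ha : auxB t a ≠ 0) :
    a ^ (Fintype.card F ^ d) = a ↔ auxB t a ^ auxM (Fintype.card F) d = 1 := by
  have hp := auxB_pow (a := a) ht d
  have hpos : Fintype.card F ^ d ≠ 0 := pow_ne_zero _ Fintype.card_ne_zero
  unfold auxM
  split_ifs with h
  · rw [if_pos h] at hp
    have e : auxB t a ^ (Fintype.card F ^ d - 1) = 1 ↔ auxB t a ^ (Fintype.card F ^ d) = auxB t a := by
      conv_rhs => rw [← Nat.succ_pred_eq_of_ne_zero hpos, pow_succ]
      exact (mul_eq_right₀ ha).symm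
    rw [e, hp]
    constructor
    · intro h; rw [h]
    · intro h; refine auxB_inj (t := t) ?_ ha h
      rw [h]; exact ha
  · rw [if_neg h] at hp
    rw [pow_succ, hp]
    constructor
    · intro h; rw [h, inv_mul_cancel₀ ha]
    · intro h
      have h' : auxB t (a ^ Fintype.card F ^ d) = auxB t a := by
        have h0 : auxB t (a ^ Fintype.card F ^ d) ≠ 0 := by
          intro h0; simp [h0] at h
        field_simp at h; exact h.symm
      refine auxB_inj (t := t) ?_ ha h'
      rw [h']; exact ha

theorem aux_g_monic (σ : F) : (X ^ 3 + C σ * X + C σ : F[X]).Monic ∧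
    (X ^ 3 + C σ * X + C σ : F[X]).natDegree = 3 := by
  constructor
  · monicity!
  · compute_degree!

theorem aux_h_deg (σ : F) : (X ^ 2 + X + C (σ + 1) : F[X]).natDegree ≤ 2 := by
  compute_degree!

theorem aux_trans {g h f : F[X]} (hg : g.Monic) (hg3 : g.natDegree = 3) (hh : h.natDegree ≤ 2)
    (hf : f.Monic) :
    (ratTransform g h f).Monic ∧ (ratTransform g h f).natDegree = 3 * f.natDegree := by
  set n := f.natDegree with hn
  have hlow : ∑ i ∈ Finset.range n, C (f.coeff i) * g ^ i * h ^ (n - i) ∈ degreeLT F (3 * n) := by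
    refine Submodule.sum_mem _ fun i hi => ?_
    rw [Finset.mem_range] at hi
    rw [mem_degreeLT]
    refine lt_of_le_of_lt degree_le_natDegree ?_
    refine Nat.cast_lt.2 ?_
    have h1 : (C (f.coeff i) * g ^ i * h ^ (n - i)).natDegree ≤ i * 3 + (n - i) * 2 := by
      refine natDegree_mul_le.trans (add_le_add ?_ ?_)
      · refine (natDegree_C_mul_le _ _).trans ?_
        refine natDegree_pow_le.trans ?_
        rw [hg3]
      · exact natDegree_pow_le.trans (Nat.mul_le_mul_left _ hh)
    exact lt_of_le_of_lt h1 (by omega)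
  have htop : ratTransform g h f =
      g ^ n + ∑ i ∈ Finset.range n, C (f.coeff i) * g ^ i * h ^ (n - i) := by
    unfold ratTransform
    rw [← hn, Finset.sum_range_succ, add_comm]
    simp [hn, hf.coeff_natDegree]
  have hd : (g ^ n).natDegree = 3 * n := by rw [hg.natDegree_pow, hg3, mul_comm]
  have hdeg : (∑ i ∈ Finset.range n, C (f.coeff i) * g ^ i * h ^ (n - i)).degree
      < (g ^ n).degree := by
    rw [degree_eq_natDegree (hg.pow n).ne_zero, hd]
    exact mem_degreeLT.1 hlow
  rw [htop]
  exact ⟨(hg.pow n).add_of_left hdeg, by rw [natDegree_add_eq_left_of_degree_lt hdeg, hd]⟩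

theorem aux_eval (g h f : F[X]) (a c : K) (hc : aeval c g = a * aeval c h) :
    aeval c (ratTransform g h f) = (aeval c h) ^ f.natDegree * aeval a f := by
  unfold ratTransform
  rw [map_sum, aeval_eq_sum_range (x := a), Finset.mul_sum]
  refine Finset.sum_congr rfl fun i hi => ?_
  rw [Finset.mem_range] at hi
  have : (aeval c h) ^ f.natDegree = (aeval c h) ^ i * (aeval c h) ^ (f.natDegree - i) := by
    rw [← pow_add]; congr 1; omega
  rw [this, map_mul, map_mul, map_pow, map_pow, aeval_C, hc, Algebra.smul_def]
  ring

theorem aux_irred [CharP K 2] [IsAlgClosed K] [Algebra.IsAlgebraic F K] (σ : F) {t : K}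
    (ht0 : t ^ 2 + t + algebraMap F K σ = 0)
    (ht : t ^ Fintype.card F = t + 1) (h3 : 3 ∣ Fintype.card F ^ 2 - 1) (a : K) (n : ℕ)
    (hn : (minpoly F a).natDegree = n) :
    Irreducible (ratTransform (X ^ 3 + C σ * X + C σ) (X ^ 2 + X + C (σ + 1)) (minpoly F a)) ↔
      auxB t a ≠ 0 ∧ auxB t a ^ ((Fintype.card F ^ (2 * n) - 1) / 3) ≠ 1 := by
  have h2 : (2 : K) = 0 := CharTwo.two_eq_zero
  set q := Fintype.card F with hq
  set s := algebraMap F K σ with hs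
  have hIntg : ∀ x : K, IsIntegral F x := fun x => (Algebra.IsAlgebraic.isAlgebraic x).isIntegral
  have hn0 : 0 < n := hn ▸ minpoly.natDegree_pos (hIntg a)
  obtain ⟨hgm, hg3⟩ := aux_g_monic σ
  obtain ⟨hPm, hPd⟩ := aux_trans hgm hg3 (aux_h_deg σ) (minpoly.monic (hIntg a))
  have hev := aux_eval (K := K) (X ^ 3 + C σ * X + C σ) (X ^ 2 + X + C (σ + 1)) (minpoly F a) a
  set P := ratTransform (X ^ 3 + C σ * X + C σ) (X ^ 2 + X + C (σ + 1)) (minpoly F a) with hP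
  -- a preimage of `a`
  obtain ⟨c, hc⟩ : ∃ c : K, c ^ 3 + s * c + s = a * (c ^ 2 + c + (s + 1)) := by
    obtain ⟨c, hc⟩ := IsAlgClosed.exists_root
      (X ^ 3 + C s * X + C s - C a * (X ^ 2 + X + C (s + 1)) : K[X])
      (by have : (X ^ 3 + C s * X + C s - C a * (X ^ 2 + X + C (s + 1)) : K[X]).degree = 3 := by
            compute_degree!
          rw [this]; decide)
    refine ⟨c, ?_⟩
    simpa [sub_eq_zero] using hc
  have hroot : aeval c P = 0 := by
    rw [hev c (by simpa [← hs] using hc), minpoly.aeval, mul_zero]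
  have hdvd : minpoly F c ∣ P := minpoly.dvd F c hroot
  set H := c ^ 2 + c + (s + 1) with hH
  have e1 : (a + t) * H = (c + t) ^ 3 := by
    linear_combination -hc + (-(t + c) + 1) * ht0 + (t * c - t * c ^ 2 + t * s - t ^ 2 * c + c * s) * h2
  have e2 : (a + t + 1) * H = (c + t + 1) ^ 3 := by
    linear_combination e1 - ht0 + (-c ^ 2 - c + s - 3 * c * t - t ^ 2 - t) * h2
  have hH0 : H ≠ 0 := by
    intro h0
    rw [h0, mul_zero] at e1 e2
    have h1 := pow_eq_zero_iff (three_ne_zero) |>.1 e1.symm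
    rw [h1] at e2
    simp at e2
  -- degree relation
  have hk1 : n ∣ (minpoly F c).natDegree := by
    rw [← hn, aux_deg_dvd]
    have hcq := (aux_deg_dvd (F := F) c _).1 dvd_rfl
    set Q := Fintype.card F ^ (minpoly F c).natDegree with hQ
    have hadd : ∀ x y : K, (x + y) ^ Q = x ^ Q + y ^ Q := fun x y => aux_add_pow x y _
    have hsQ : s ^ Q = s := aux_alg_pow σ _
    have h5 : a ^ Q * H = a * H := by
      have h6 := congrArg (· ^ Q) hc
      simp only [mul_pow, hadd, one_pow, hsQ, hcq, hH, pow_right_comm c _ Q] at h6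
      rw [← hc, h6]
    exact mul_right_cancel₀ hH0 h5
  have hk2 : (minpoly F c).natDegree ≤ 3 * n := by
    rw [← hn, ← hPd]; exact natDegree_le_of_dvd hdvd hPm.ne_zero
  have hk0 : 0 < (minpoly F c).natDegree := minpoly.natDegree_pos (hIntg c)
  have hA : Irreducible P ↔ c ^ q ^ (2 * n) ≠ c := by
    rw [Ne, ← aux_deg_dvd]
    obtain ⟨e, he⟩ := hk1
    have he3 : e ≤ 3 := by
      rw [he, mul_comm] at hk2; exact Nat.le_of_mul_le_mul_right hk2 hn0
    have he0 : 0 < e := by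
      rcases Nat.eq_zero_or_pos e with h | h
      · rw [he, h] at hk0; simp at hk0
      · exact h
    have : (minpoly F c).natDegree ∣ 2 * n ↔ e ∣ 2 := by
      rw [he, mul_comm 2 n]; exact Nat.mul_dvd_mul_iff_left hn0
    rw [this]
    constructor
    · intro hirr
      have : P = minpoly F c := minpoly.eq_of_irreducible_of_monic hirr hroot hPm
      rw [← this, hPd, hn, mul_comm] at he
      have : 3 = e := Nat.eq_of_mul_eq_mul_left hn0 he
      rw [← this]; decide
    · intro hnd
      have : e = 3 := by interval_cases e <;> simp_all
      have hPc : minpoly F c = P := by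
        refine (eq_of_monic_of_dvd_of_natDegree_le (minpoly.monic (hIntg c)) hPm hdvd ?_).symm
        rw [hPd, hn, he, this, mul_comm]
      rw [← hPc]; exact minpoly.irreducible (hIntg c)
  rw [hA]
  have hz3 : auxB t c ^ 3 = auxB t a := by
    unfold auxB
    rw [div_pow, ← e1, ← e2, mul_div_mul_right _ _ hH0]
  have h3' : 3 ∣ q ^ (2 * n) - 1 := by
    rw [pow_mul]; exact h3.trans (by simpa using Nat.sub_dvd_pow_sub_pow (q ^ 2) 1 n)
  by_cases h0 : auxB t a = 0
  · simp only [h0, ne_eq, not_true_eq_false, false_and, iff_false, not_not]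
    rw [h0] at hz3
    have hz : auxB t c = 0 := pow_eq_zero_iff (three_ne_zero) |>.1 hz3
    have hev : Even (2 * n) := even_two_mul n
    have htp := aux_theta_pow (F := F) ht (2 * n)
    rw [if_pos hev] at htp
    have hadd : ∀ x y : K, (x + y) ^ q ^ (2 * n) = x ^ q ^ (2 * n) + y ^ q ^ (2 * n) :=
      fun x y => aux_add_pow x y _
    unfold auxB at hz
    rcases div_eq_zero_iff.1 hz with h | h
    · have : c = t := by linear_combination h - t * h2
      rw [this]; exact htp
    · have : c = t + 1 := by linear_combination h - (t + 1) * h2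
      rw [this, hadd, htp, one_pow]
  · have hz0 : auxB t c ≠ 0 := by
      intro hz; rw [hz] at hz3; exact h0 (by rw [← hz3]; simp)
    rw [Ne, aux_fix_iff ht _ hz0, auxM, if_pos (even_two_mul n), ← hz3, ← pow_mul,
      Nat.mul_div_cancel' h3']
    simp [hz0, hq]

theorem aux_card_roots [CharP K 2] [IsAlgClosed K] (m : ℕ) (hm : Odd m) :
    (nthRootsFinset m (1 : K)).card = m := by
  have : NeZero (m : K) := ⟨by
    rw [Ne, CharP.cast_eq_zero_iff K 2 m]
    intro h
    exact (Nat.not_even_iff_odd.2 hm) (even_iff_two_dvd.2 h)⟩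
  obtain ⟨ζ, hζ⟩ := HasEnoughRootsOfUnity.exists_primitiveRoot K m
  exact hζ.card_nthRootsFinset

theorem aux_card_good [CharP K 2] [IsAlgClosed K] (m E : ℕ) (hm : Odd m) :
    {b : K | b ^ m = 1 ∧ b ^ E ≠ 1}.Finite ∧
    {b : K | b ^ m = 1 ∧ b ^ E ≠ 1}.ncard + m.gcd E = m := by
  classical
  have hgo : Odd (m.gcd E) := hm.of_dvd_nat (Nat.gcd_dvd_left m E)
  have e : {b : K | b ^ m = 1 ∧ b ^ E ≠ 1} =
      ((nthRootsFinset m (1 : K) \ nthRootsFinset (m.gcd E) (1 : K) : Finset K) : Set K) := by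
    ext b
    simp only [Set.mem_ofPred_eq, Finset.coe_sdiff, Set.mem_sdiff, Finset.mem_coe,
      mem_nthRootsFinset hm.pos, mem_nthRootsFinset hgo.pos, pow_gcd_eq_one]
    tauto
  rw [e]
  refine ⟨Finset.finite_toSet _, ?_⟩
  rw [Set.ncard_coe_finset]
  have hsub : nthRootsFinset (m.gcd E) (1 : K) ⊆ nthRootsFinset m (1 : K) := by
    intro b
    rw [mem_nthRootsFinset hm.pos, mem_nthRootsFinset hgo.pos, pow_gcd_eq_one]
    exact And.left
  have := Finset.card_sdiff_add_card_eq_card hsub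
  rwa [aux_card_roots _ hm, aux_card_roots _ hgo] at this

theorem auxM_odd (d : ℕ) (hd : 0 < d) : Odd (auxM (Fintype.card F) d) := by
  obtain ⟨r, hr, h⟩ := FiniteField.card F 2
  have : Even (Fintype.card F ^ d) := by
    rw [h, ← pow_mul]
    exact (Nat.even_pow.2 ⟨even_two, by positivity⟩)
  have hpos : 0 < Fintype.card F ^ d := pow_pos Fintype.card_pos _
  unfold auxM
  split_ifs
  · exact Nat.Even.sub_odd hpos this odd_one
  · exact this.add_one

theorem aux_T [CharP K 2] [IsAlgClosed K] {t : K} (ht : t ^ Fintype.card F = t + 1)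
    (d E : ℕ) (hd : 0 < d) :
    {a : K | a ^ (Fintype.card F ^ d) = a ∧ auxB t a ≠ 0 ∧ auxB t a ^ E ≠ 1}.Finite ∧
    {a : K | a ^ (Fintype.card F ^ d) = a ∧ auxB t a ≠ 0 ∧ auxB t a ^ E ≠ 1}.ncard
      + (auxM (Fintype.card F) d).gcd E = auxM (Fintype.card F) d := by
  have hm := auxM_odd (F := F) d hd
  obtain ⟨h1, h2⟩ := aux_card_good (K := K) _ E hm
  set S := {a : K | a ^ (Fintype.card F ^ d) = a ∧ auxB t a ≠ 0 ∧ auxB t a ^ E ≠ 1} with hS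
  have hinj : Set.InjOn (auxB t) S := fun a ha b hb h => auxB_inj ha.2.1 hb.2.1 h
  have him : auxB t '' S = {b : K | b ^ auxM (Fintype.card F) d = 1 ∧ b ^ E ≠ 1} := by
    ext b
    constructor
    · rintro ⟨a, ⟨ha1, ha2, ha3⟩, rfl⟩
      exact ⟨(aux_fix_iff ht d ha2).1 ha1, ha3⟩
    · rintro ⟨hb1, hb2⟩
      have hb0 : b ≠ 0 := by
        rintro rfl
        rw [zero_pow hm.pos.ne'] at hb1
        exact zero_ne_one hb1
      have hbn1 : b ≠ 1 := by
        rintro rfl; simp at hb2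
      obtain ⟨a, rfl⟩ := auxB_surj (t := t) hb0 hbn1
      exact ⟨a, ⟨(aux_fix_iff ht d hb0).2 hb1, hb0, hb2⟩, rfl⟩
  rw [← him] at h1 h2
  rw [hinj.ncard_image] at h2
  exact ⟨h1.of_finite_image hinj, h2⟩

theorem aux_sum_D [CharP K 2] [IsAlgClosed K] [Algebra.IsAlgebraic F K] {t : K}
    (ht : t ^ Fintype.card F = t + 1) (d E : ℕ) (hd : 0 < d) :
    ∑ e ∈ d.divisors,
      {a : K | (minpoly F a).natDegree = e ∧ auxB t a ≠ 0 ∧ auxB t a ^ E ≠ 1}.ncard =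
    {a : K | a ^ (Fintype.card F ^ d) = a ∧ auxB t a ≠ 0 ∧ auxB t a ^ E ≠ 1}.ncard := by
  classical
  obtain ⟨hfin, -⟩ := aux_T ht d E hd
  rw [Set.ncard_eq_toFinset_card _ hfin,
    Finset.card_eq_sum_card_fiberwise (f := fun a => (minpoly F a).natDegree) (t := d.divisors)]
  · refine Finset.sum_congr rfl fun e he => ?_
    rw [← Set.ncard_coe_finset]
    congr 1
    ext a
    simp only [Set.mem_ofPred_eq, Finset.coe_filter, Set.Finite.mem_toFinset]
    constructor
    · rintro ⟨rfl, h⟩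
      exact ⟨⟨(aux_deg_dvd a d).1 (Nat.dvd_of_mem_divisors he), h⟩, rfl⟩
    · rintro ⟨⟨_, h⟩, rfl⟩
      exact ⟨rfl, h⟩
  · intro a ha
    simp only [Set.Finite.coe_toFinset, Set.mem_ofPred_eq] at ha
    simp only [Finset.mem_coe, Nat.mem_divisors]
    exact ⟨(aux_deg_dvd a d).2 ha.1, hd.ne'⟩

theorem aux_count [CharP K 2] [IsAlgClosed K] [Algebra.IsAlgebraic F K] (σ : F) {t : K}
    (ht0 : t ^ 2 + t + algebraMap F K σ = 0)
    (ht : t ^ Fintype.card F = t + 1) (h3 : 3 ∣ Fintype.card F ^ 2 - 1) (n : ℕ) (hn : 0 < n) :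
    {a : K | (minpoly F a).natDegree = n ∧ auxB t a ≠ 0 ∧
      auxB t a ^ ((Fintype.card F ^ (2 * n) - 1) / 3) ≠ 1}.ncard =
    (IrredSet (X ^ 3 + C σ * X + C σ) (X ^ 2 + X + C (σ + 1)) n).ncard * n := by
  classical
  set S := {a : K | (minpoly F a).natDegree = n ∧ auxB t a ≠ 0 ∧
      auxB t a ^ ((Fintype.card F ^ (2 * n) - 1) / 3) ≠ 1} with hS
  have hIntg : ∀ x : K, IsIntegral F x := fun x => (Algebra.IsAlgebraic.isAlgebraic x).isIntegral
  have hfin : S.Finite := by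
    refine (aux_T ht n ((Fintype.card F ^ (2 * n) - 1) / 3) hn).1.subset ?_
    rintro a ⟨h1, h2⟩
    exact ⟨(aux_deg_dvd a n).1 (by rw [h1]), h2⟩
  have hmem : ∀ a : K, a ∈ S ↔ minpoly F a ∈
      IrredSet (X ^ 3 + C σ * X + C σ) (X ^ 2 + X + C (σ + 1)) n := by
    intro a
    constructor
    · rintro ⟨h1, h2⟩
      exact ⟨minpoly.monic (hIntg a), minpoly.irreducible (hIntg a), h1,
        (aux_irred σ ht0 ht h3 a n h1).2 h2⟩
    · rintro ⟨_, _, h1, h2⟩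
      exact ⟨h1, (aux_irred σ ht0 ht h3 a n h1).1 h2⟩
  have him : IrredSet (X ^ 3 + C σ * X + C σ) (X ^ 2 + X + C (σ + 1)) n =
      ((hfin.toFinset.image (minpoly F) : Finset F[X]) : Set F[X]) := by
    ext f
    simp only [Finset.coe_image, Set.Finite.coe_toFinset, Set.mem_image]
    constructor
    · intro hf
      obtain ⟨a, ha⟩ := IsAlgClosed.exists_aeval_eq_zero K f (degree_pos_of_irreducible hf.2.1).ne'
      have : f = minpoly F a := minpoly.eq_of_irreducible_of_monic hf.2.1 ha hf.1
      exact ⟨a, (hmem a).2 (this ▸ hf), this.symm⟩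
    · rintro ⟨a, ha, rfl⟩
      exact (hmem a).1 ha
  rw [him, Set.ncard_coe_finset, Set.ncard_eq_toFinset_card _ hfin,
    Finset.card_eq_sum_card_image (minpoly F), Finset.sum_const_nat]
  intro f hf
  have hf' : f ∈ IrredSet (X ^ 3 + C σ * X + C σ) (X ^ 2 + X + C (σ + 1)) n := by
    rw [him]; exact hf
  have hsep : f.Separable := PerfectField.separable_of_irreducible hf'.2.1
  have hc := card_rootSet_eq_natDegree (K := K) hsep (IsAlgClosed.splits _)
  rw [hf'.2.2.1] at hc
  rw [← hc, ← Set.toFinset_card]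
  congr 1
  ext a
  rw [Finset.mem_filter, Set.Finite.mem_toFinset, Set.mem_toFinset, mem_rootSet, hmem]
  constructor
  · rintro ⟨_, rfl⟩
    exact ⟨hf'.2.1.ne_zero, minpoly.aeval F a⟩
  · rintro ⟨_, h⟩
    have : f = minpoly F a := minpoly.eq_of_irreducible_of_monic hf'.2.1 h hf'.1
    exact ⟨this ▸ hf', this.symm⟩

end Aux

theorem aux_gcd_arith {m k E : ℕ} (h : m * k = 3 * E) :
    (3 ∣ k → m.gcd E = m) ∧ (¬ 3 ∣ k → 3 * m.gcd E = m) := by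
  constructor
  · rintro ⟨j, rfl⟩
    have : E = m * j := by linarith
    rw [this]; exact Nat.gcd_eq_left (Dvd.intro j rfl)
  · intro hk
    have h3 : 3 ∣ m := by
      have : 3 ∣ m * k := ⟨E, h⟩
      exact (Nat.prime_three.dvd_mul.1 this).resolve_right hk
    obtain ⟨j, rfl⟩ := h3
    have : E = j * k := by linarith
    have hc : Nat.gcd 3 k = 1 := (Nat.Prime.coprime_iff_not_dvd Nat.prime_three).2 hk
    rw [this, mul_comm 3 j, Nat.gcd_mul_left, hc]; ring

theorem aux_geom (Q k : ℕ) (hQ : 0 < Q) (h3 : Q % 3 = 1) :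
    ∃ S, Q ^ k - 1 = (Q - 1) * S ∧ S % 3 = k % 3 := by
  refine ⟨∑ i ∈ Finset.range k, Q ^ i, ?_, ?_⟩
  · have h1 : 1 ≤ Q ^ k := Nat.one_le_pow _ _ hQ
    zify [h1, Nat.succ_le_of_lt hQ]
    exact (mul_geom_sum _ _).symm
  · induction k with
    | zero => simp
    | succ k ih =>
      rw [Finset.sum_range_succ, Nat.add_mod, ih, Nat.pow_mod, h3]
      simp [Nat.add_mod]

theorem aux_factor {q n d : ℕ} (hq : q % 3 = 1 ∨ q % 3 = 2) (hd : d ∣ n) (hn : 0 < n) :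
    ∃ k, auxM q d * k = q ^ (2 * n) - 1 ∧
      (3 ∣ k ↔ 3 ∣ n / d ∨ (q % 3 = 1 ∧ ¬ Even d)) := by
  obtain ⟨j, rfl⟩ := hd
  have hd0 : 0 < d := Nat.pos_of_mul_pos_right hn
  have hq0 : 0 < q := by omega
  have hQ : q ^ (2 * d) % 3 = 1 := by
    rw [pow_mul, Nat.pow_mod, Nat.pow_mod q]
    rcases hq with h | h <;> simp [h]
  rw [Nat.mul_div_cancel_left _ hd0]
  unfold auxM
  split_ifs with he
  · have hQ' : q ^ d % 3 = 1 := by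
      obtain ⟨c, rfl⟩ := even_iff_two_dvd.1 he
      rw [pow_mul, Nat.pow_mod, Nat.pow_mod q]
      rcases hq with h | h <;> simp [h]
    obtain ⟨S, hS1, hS2⟩ := aux_geom (q ^ d) (2 * j) (pow_pos hq0 _) hQ'
    refine ⟨S, ?_, ?_⟩
    · rw [← hS1, ← pow_mul]; congr 2; ring
    · simp only [he, not_true_eq_false, and_false, or_false]; omega
  · obtain ⟨S, hS1, hS2⟩ := aux_geom (q ^ (2 * d)) j (pow_pos hq0 _) hQ
    refine ⟨(q ^ d - 1) * S, ?_, ?_⟩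
    · have e : (q ^ d + 1) * (q ^ d - 1) = q ^ (2 * d) - 1 := by
        have := Nat.sq_sub_sq (q ^ d) 1
        rw [← this, one_pow, ← pow_mul, mul_comm d 2]
      rw [← mul_assoc, e, ← hS1, ← pow_mul, mul_assoc]
    · have ho : Odd d := Nat.not_even_iff_odd.1 he
      have hp : 0 < q ^ d := pow_pos hq0 _
      rw [Nat.prime_three.dvd_mul]
      rcases hq with h | h
      · have : q ^ d % 3 = 1 := by rw [Nat.pow_mod, h]; simp
        simp only [h, he, not_false_eq_true, and_self, or_true, iff_true]
        left; omega
      · have : q ^ d % 3 = 2 := by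
          obtain ⟨c, rfl⟩ := ho
          rw [pow_succ, pow_mul, Nat.mul_mod, Nat.pow_mod, Nat.pow_mod q, h]; simp
        simp only [h]; omega

theorem aux_sum (N m : ℕ) (hN : 0 < N) (hm : 0 < m) (r : ℚ) :
    ∑ x ∈ (N * m).divisors, ((ArithmeticFunction.moebius x : ℤ) : ℚ) *
      (if x ∣ m then r ^ (N * m / x) else 0) = m * Ifun m (r ^ N) := by
  have hm' : (m : ℚ) ≠ 0 := by positivity
  unfold Ifun
  rw [← mul_assoc, mul_one_div_cancel hm', one_mul]
  have hsub : m.divisors ⊆ (N * m).divisors :=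
    Nat.divisors_subset_of_dvd (by positivity) (Dvd.intro_left N rfl)
  rw [← Finset.sum_subset hsub]
  · refine Finset.sum_congr rfl fun x hx => ?_
    have hx' := Nat.dvd_of_mem_divisors hx
    rw [if_pos hx', ← pow_mul, Nat.mul_div_assoc _ hx']
  · intro x _ hx
    rw [if_neg, mul_zero]
    intro h; exact hx (Nat.mem_divisors.2 ⟨h, hm.ne'⟩)

theorem auxM_cast (q d : ℕ) (hq : 0 < q) : (auxM q d : ℚ) = (q : ℚ) ^ d - (-1) ^ d := by
  unfold auxM
  split_ifs with h
  · rw [h.neg_one_pow, Nat.cast_sub (Nat.one_le_pow _ _ hq)]; simp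
  · rw [(Nat.not_even_iff_odd.1 h).neg_one_pow]; simp

theorem aux_main {F : Type*} [Field F] [Fintype F] [CharP F 2] (σ : F)
    (hσ : letI : Algebra (ZMod 2) F := ZMod.algebra F 2
          Algebra.trace (ZMod 2) F σ = 1) (n : ℕ) (hn : 0 < n)
    (hq3 : Fintype.card F % 3 = 1 ∨ Fintype.card F % 3 = 2) :
    ((IrredSet (X ^ 3 + C σ * X + C σ) (X ^ 2 + X + C (σ + 1)) n).ncard : ℚ) * n =
      ∑ x ∈ n.divisors, ((ArithmeticFunction.moebius x : ℤ) : ℚ) *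
        (if 3 ∣ x ∨ (Fintype.card F % 3 = 1 ∧ ¬ Even (n / x)) then 0
          else 2 / 3 * ((Fintype.card F : ℚ) ^ (n / x) - (-1) ^ (n / x))) := by
  have : CharP (AlgebraicClosure F) 2 :=
    charP_of_injective_algebraMap (algebraMap F (AlgebraicClosure F)).injective 2
  obtain ⟨t, ht0, ht⟩ := aux_theta (K := AlgebraicClosure F) σ hσ
  have hq0 : 0 < Fintype.card F := Fintype.card_pos
  have hsq : Fintype.card F ^ 2 % 3 = 1 := by
    rw [Nat.pow_mod]; rcases hq3 with h | h <;> simp [h]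
  have h3 : 3 ∣ Fintype.card F ^ 2 - 1 := by omega
  have h3n : 3 ∣ Fintype.card F ^ (2 * n) - 1 := by
    rw [pow_mul]
    exact h3.trans (by simpa using Nat.sub_dvd_pow_sub_pow (Fintype.card F ^ 2) 1 n)
  have hc := aux_count σ ht0 ht h3 n hn
  set E := (Fintype.card F ^ (2 * n) - 1) / 3 with hE
  have hE3 : Fintype.card F ^ (2 * n) - 1 = 3 * E := (Nat.mul_div_cancel' h3n).symm
  have hmob := (ArithmeticFunction.sum_eq_iff_sum_mul_moebius_eq (R := ℚ)
    (f := fun d => ({a : AlgebraicClosure F | (minpoly F a).natDegree = d ∧ auxB t a ≠ 0 ∧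
      auxB t a ^ E ≠ 1}.ncard : ℚ))
    (g := fun d => ({a : AlgebraicClosure F | a ^ (Fintype.card F ^ d) = a ∧ auxB t a ≠ 0 ∧
      auxB t a ^ E ≠ 1}.ncard : ℚ))).1 (fun d hd => by
        rw [← aux_sum_D ht d E hd]; push_cast; rfl) n hn
  rw [← Nat.cast_mul, ← hc, ← hmob]
  rw [Nat.sum_divisorsAntidiagonal (fun x y => ((ArithmeticFunction.moebius x : ℤ) : ℚ) *
    ({a : AlgebraicClosure F | a ^ (Fintype.card F ^ y) = a ∧ auxB t a ≠ 0 ∧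
      auxB t a ^ E ≠ 1}.ncard : ℚ))]
  refine Finset.sum_congr rfl fun x hx => ?_
  congr 1
  have hxn := Nat.dvd_of_mem_divisors hx
  have hx0 : 0 < x := Nat.pos_of_dvd_of_pos hxn hn
  have hd0 : 0 < n / x := Nat.div_pos (Nat.le_of_dvd hn hxn) hx0
  obtain ⟨k, hk1, hk2⟩ := aux_factor (q := Fintype.card F) hq3 (Nat.div_dvd_of_dvd hxn) hn
  rw [Nat.div_div_self hxn hn.ne'] at hk2
  obtain ⟨-, hT⟩ := aux_T ht (n / x) E hd0
  obtain ⟨g1, g2⟩ := aux_gcd_arith (hk1.trans hE3)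
  split_ifs with h
  · have := g1 (hk2.2 h)
    rw [this] at hT
    exact Nat.cast_eq_zero.2 (Nat.add_eq_right.1 hT)
  · have := g2 (fun h' => h (hk2.1 h'))
    rw [← auxM_cast _ _ hq0]
    have h1 : ((_ : ℕ) : ℚ) = _ := congrArg (Nat.cast : ℕ → ℚ) hT
    have h2 : ((_ : ℕ) : ℚ) = _ := congrArg (Nat.cast : ℕ → ℚ) this
    push_cast at h1 h2
    linarith

theorem aux_dvd_iff (n m x : ℕ) (e : ℕ) (hnm : n = 3 ^ e * m) (h3 : ¬ 3 ∣ m) (hx : x ∣ n) :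
    ¬ 3 ∣ x ↔ x ∣ m := by
  constructor
  · intro h
    have : Nat.Coprime x (3 ^ e) :=
      (((Nat.Prime.coprime_iff_not_dvd Nat.prime_three).2 h).symm).pow_right e
    exact this.dvd_of_dvd_mul_left (hnm ▸ hx)
  · intro h h'
    exact h3 (h'.trans h)

theorem aux_nThree (n : ℕ) (hn : 0 < n) : n = nThree n * (n / nThree n) ∧ ¬ 3 ∣ n / nThree n ∧
    Odd (nThree n) := by
  unfold nThree
  exact ⟨(Nat.ordProj_mul_ordCompl_eq_self n 3).symm, Nat.not_dvd_ordCompl Nat.prime_three hn.ne',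
    Odd.pow (by decide)⟩

theorem aux_final2 (n q : ℕ) (A : ℚ) (hn : 0 < n) (hq : q % 3 = 2)
    (h : A * n = ∑ x ∈ n.divisors, ((ArithmeticFunction.moebius x : ℤ) : ℚ) *
        (if 3 ∣ x ∨ (q % 3 = 1 ∧ ¬ Even (n / x)) then 0
          else 2 / 3 * ((q : ℚ) ^ (n / x) - (-1) ^ (n / x)))) :
    A = (2 / (3 * (nThree n : ℚ))) *
          (Ifun (n / nThree n) ((q : ℚ) ^ nThree n) - Ifun (n / nThree n) (-1)) := by
  obtain ⟨h1, h2, h3⟩ := aux_nThree n hn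
  have hN := h3.pos
  have hN3 : nThree n = 3 ^ (n.factorization 3) := rfl
  generalize nThree n = N at *
  generalize n / N = m at *
  have hm : 0 < m := by
    rcases Nat.eq_zero_or_pos m with h | h
    · simp [h] at h2
    · exact h
  have s1 := aux_sum N m hN hm q
  have s2 := aux_sum N m hN hm (-1)
  rw [← h1] at s1 s2
  rw [h3.neg_one_pow] at s2
  have key : A * n = 2 / 3 * (m * Ifun m ((q : ℚ) ^ N) - m * Ifun m (-1)) := by
    rw [h, ← s1, ← s2, ← Finset.sum_sub_distrib, Finset.mul_sum]
    refine Finset.sum_congr rfl fun x hx => ?_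
    have hd := aux_dvd_iff n m x _ (hN3 ▸ h1) h2 (Nat.dvd_of_mem_divisors hx)
    by_cases hxm : x ∣ m
    · have := hd.2 hxm
      simp [hxm, this, hq]; ring
    · have : 3 ∣ x := by
        by_contra hh; exact hxm (hd.1 hh)
      simp [hxm, this]
  have hn' : (n : ℚ) = N * m := by exact_mod_cast h1
  rw [hn'] at key
  have hN' : (N : ℚ) ≠ 0 := by positivity
  have hm' : (m : ℚ) ≠ 0 := by positivity
  field_simp
  apply mul_right_cancel₀ hm'
  linear_combination 3 * key

theorem aux_final1 (n q : ℕ) (A : ℚ) (hn : 0 < n) (hq : q % 3 = 1)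
    (h : A * n = ∑ x ∈ n.divisors, ((ArithmeticFunction.moebius x : ℤ) : ℚ) *
        (if 3 ∣ x ∨ (q % 3 = 1 ∧ ¬ Even (n / x)) then 0
          else 2 / 3 * ((q : ℚ) ^ (n / x) - (-1) ^ (n / x)))) :
    A = (1 / (3 * (nThree n : ℚ))) *
          (IfunD n (2 * nThree n) ((q : ℚ) ^ (2 * nThree n)) - IfunD n (2 * nThree n) 1) := by
  obtain ⟨h1, h2, h3⟩ := aux_nThree n hn
  have hN := h3.pos
  have hN3 : nThree n = 3 ^ (n.factorization 3) := rfl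
  have hn0 : (n : ℚ) ≠ 0 := by positivity
  unfold IfunD
  by_cases hdv : 2 * nThree n ∣ n
  · rw [if_pos hdv, if_pos hdv]
    generalize n / nThree n = m' at *
    generalize nThree n = N at *
    obtain ⟨m, hm⟩ := hdv
    have hmm : m' = 2 * m := by
      apply Nat.eq_of_mul_eq_mul_left hN
      rw [← h1, hm]; ring
    have hm0 : 0 < m := by
      rcases Nat.eq_zero_or_pos m with h | h
      · simp [h] at hm; omega
      · exact h
    have hnm : n / (2 * N) = m := by
      rw [hm]; exact Nat.mul_div_cancel_left _ (by positivity)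
    rw [hnm]
    have s1 := aux_sum (2 * N) m (by positivity) hm0 q
    have s2 := aux_sum (2 * N) m (by positivity) hm0 1
    rw [← hm] at s1 s2
    rw [one_pow] at s2
    have key : A * n = 2 / 3 * (m * Ifun m ((q : ℚ) ^ (2 * N)) - m * Ifun m 1) := by
      rw [h, ← s1, ← s2, ← Finset.sum_sub_distrib, Finset.mul_sum]
      refine Finset.sum_congr rfl fun x hx => ?_
      have hxn := Nat.dvd_of_mem_divisors hx
      have hx0 : 0 < x := Nat.pos_of_dvd_of_pos hxn hn
      have hd : x ∣ m ↔ ¬ 3 ∣ x ∧ Even (n / x) := by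
        constructor
        · intro hxm
          refine ⟨fun h' => h2 (h'.trans (hxm.trans ⟨2, by rw [hmm]; ring⟩)), ?_⟩
          rw [hm, Nat.mul_div_assoc _ hxm, mul_assoc]
          exact even_two_mul _
        · rintro ⟨ha, hb⟩
          obtain ⟨c, hc⟩ := even_iff_two_dvd.1 hb
          have e1 : n = x * (2 * c) := by rw [← hc, Nat.mul_div_cancel' hxn]
          have e2 : N * m = x * c := by
            have : 2 * (N * m) = 2 * (x * c) := by rw [← mul_assoc, ← hm, e1]; ring
            omega
          refine (aux_dvd_iff (N * m) m x _ (by rw [hN3]) ?_ ⟨c, e2⟩).1 ha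
          intro h'; exact h2 (hmm ▸ h'.mul_left 2)
      by_cases hxm : x ∣ m
      · obtain ⟨ha, hb⟩ := hd.1 hxm
        simp [hxm, ha, hb, hq]; ring
      · have hh : 3 ∣ x ∨ (q % 3 = 1 ∧ ¬ Even (n / x)) := by
          by_contra hc
          push Not at hc
          exact hxm (hd.2 ⟨hc.1, hc.2 hq⟩)
        rw [if_pos hh]
        simp [hxm]
    have hn' : (n : ℚ) = 2 * N * m := by exact_mod_cast hm
    rw [hn'] at key
    have hN' : (N : ℚ) ≠ 0 := by positivity
    have hm' : (m : ℚ) ≠ 0 := by positivity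
    field_simp
    apply mul_right_cancel₀ hm'
    linear_combination 3 / 2 * key
  · rw [if_neg hdv, if_neg hdv, sub_zero, mul_zero]
    have hodd : ¬ 2 ∣ n := by
      intro h2n
      apply hdv
      exact Nat.Coprime.mul_dvd_of_dvd_of_dvd (Nat.coprime_two_left.2 h3) h2n ⟨_, h1⟩
    have : A * n = 0 := by
      rw [h]
      refine Finset.sum_eq_zero fun x hx => ?_
      rw [if_pos, mul_zero]
      right
      refine ⟨hq, fun he => hodd ?_⟩
      exact (even_iff_two_dvd.1 he).trans (Nat.div_dvd_of_dvd (Nat.dvd_of_mem_divisors hx))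
    exact (mul_eq_zero.1 this).resolve_right hn0

/-- Theorem 15: over `F_q` of characteristic two, for `σ ∈ F_q` of absolute trace `1`,
counting monic irreducible `f` of degree `n > 1` such that `f_R` is irreducible for
`R(x) = (x³ + σx + σ)/(x² + x + σ + 1)`. -/
theorem stmt15 {F : Type*} [Field F] [Fintype F] [CharP F 2] (q : ℕ)
    (hq : Fintype.card F = q) (σ : F)
    (hσ : letI : Algebra (ZMod 2) F := ZMod.algebra F 2
          Algebra.trace (ZMod 2) F σ = 1)
    (n : ℕ) (hn : 1 < n) :
    (q % 3 = 1 →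
      ((IrredSet (X ^ 3 + C σ * X + C σ) (X ^ 2 + X + C (σ + 1)) n).ncard : ℚ) =
        (1 / (3 * (nThree n : ℚ))) *
          (IfunD n (2 * nThree n) ((q : ℚ) ^ (2 * nThree n)) - IfunD n (2 * nThree n) 1)) ∧
    (q % 3 = 2 →
      ((IrredSet (X ^ 3 + C σ * X + C σ) (X ^ 2 + X + C (σ + 1)) n).ncard : ℚ) =
        (2 / (3 * (nThree n : ℚ))) *
          (Ifun (n / nThree n) ((q : ℚ) ^ nThree n) - Ifun (n / nThree n) (-1))) := by
  have hm : q % 3 = 1 ∨ q % 3 = 2 → ((IrredSet (X ^ 3 + C σ * X + C σ) (X ^ 2 + X + C (σ + 1))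
      n).ncard : ℚ) * n = ∑ x ∈ n.divisors, ((ArithmeticFunction.moebius x : ℤ) : ℚ) *
        (if 3 ∣ x ∨ (q % 3 = 1 ∧ ¬ Even (n / x)) then 0
          else 2 / 3 * ((q : ℚ) ^ (n / x) - (-1) ^ (n / x))) := by
    intro h
    subst hq
    exact aux_main σ hσ n (by omega) h
  constructor
  · intro h
    have hm := hm (Or.inl h)
    exact aux_final1 n q _ (by omega) h hm
  · intro h
    have hm := hm (Or.inr h)
    exact aux_final2 n q _ (by omega) h hm
end
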